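/- (Euclidean Mean Contracts) Let K < 0, let n ≥ 2, and let x_1, …, x_n ∈ ℍ^d_K. Define the Euclidean mean x̄ = (1/n)∑_{i=1}^n x_i and its projection onto the hyperboloid m^Euc = Π_K(x̄) = x̄ / √(K·⟨x̄,x̄⟩_L). Then the radial depth satisfies r(m^Euc) ≤ (1/n)∑_{i=1}^n r(x_i), with equality if and only if all x_i are identical. -/

import Mathlib

/-!
The orthogonal complement of a timelike vector is positive definite for the Lorentzian product.
If `x` and `y` lie on the hyperboloid, then `x + y` is timelike and orthogonal to `x - y`, so
`⟨x - y, x - y⟩_L ≥ 0` with equality only for `x = y`; polarization turns this into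
`K⟨x,y⟩_L ≥ 1` with the same equality case. For a convex combination `x̄ = ∑ᵢ wᵢ xᵢ` with positive
weights, `K⟨x̄,x̄⟩_L = ∑ᵢⱼ wᵢ wⱼ K⟨xᵢ,xⱼ⟩_L` is therefore at least `1`, and equals `1` exactly when
all points coincide. Projecting `x̄` divides its time component by the square root of this number.
-/

noncomputable section

/-- Lorentzian inner product on ℝ^{d+1}: ⟨x,y⟩_L = −x₀y₀ + ∑_{i=1}^d xᵢyᵢ. -/
def lorentzInner {d : ℕ} (x y : Fin (d + 1) → ℝ) : ℝ :=
  (∑ i, x i * y i) - 2 * x 0 * y 0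

/-- Membership in the Lorentz model ℍ^d_K: ⟨x,x⟩_L = 1/K and x₀ > 0. -/
def onHyperboloid {d : ℕ} (K : ℝ) (x : Fin (d + 1) → ℝ) : Prop :=
  lorentzInner x x = 1 / K ∧ 0 < x 0

open Finset

section Lorentz

variable {d : ℕ} {K : ℝ} {x y u v : Fin (d + 1) → ℝ}

theorem lorentzInner_eq_sum_succ (x y : Fin (d + 1) → ℝ) :
    lorentzInner x y = ∑ i : Fin d, x i.succ * y i.succ - x 0 * y 0 := by
  rw [lorentzInner, Fin.sum_univ_succ]
  ring

theorem lorentzInner_self (x : Fin (d + 1) → ℝ) :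
    lorentzInner x x = ∑ i : Fin d, x i.succ ^ 2 - x 0 ^ 2 := by
  simp only [lorentzInner_eq_sum_succ, sq]

theorem lorentzInner_comm (x y : Fin (d + 1) → ℝ) : lorentzInner x y = lorentzInner y x := by
  simp only [lorentzInner_eq_sum_succ, mul_comm]

theorem lorentzInner_add_left (x y z : Fin (d + 1) → ℝ) :
    lorentzInner (x + y) z = lorentzInner x z + lorentzInner y z := by
  simp only [lorentzInner, Pi.add_apply, add_mul, sum_add_distrib]
  ring

theorem lorentzInner_smul_left (a : ℝ) (x y : Fin (d + 1) → ℝ) :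
    lorentzInner (a • x) y = a * lorentzInner x y := by
  simp only [lorentzInner, Pi.smul_apply, smul_eq_mul, mul_assoc, ← mul_sum]
  ring

/-- The Lorentzian inner product as a bilinear form, so that linearity in each argument is
available from the library. -/
def lorentzForm (d : ℕ) : LinearMap.BilinForm ℝ (Fin (d + 1) → ℝ) :=
  LinearMap.mk₂ ℝ lorentzInner lorentzInner_add_left lorentzInner_smul_left
    (fun x y z => by simp only [lorentzInner_comm x, lorentzInner_add_left])
    (fun a x y => by simp only [lorentzInner_comm x, lorentzInner_smul_left, smul_eq_mul])

theorem lorentzForm_apply (x y : Fin (d + 1) → ℝ) : lorentzForm d x y = lorentzInner x y :=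
  rfl

theorem lorentzInner_add_self (x y : Fin (d + 1) → ℝ) :
    lorentzInner (x + y) (x + y) =
      lorentzInner x x + 2 * lorentzInner x y + lorentzInner y y := by
  simp only [← lorentzForm_apply, map_add, LinearMap.add_apply]
  simp only [lorentzForm_apply, lorentzInner_comm y x]
  ring

theorem lorentzInner_sub_self (x y : Fin (d + 1) → ℝ) :
    lorentzInner (x - y) (x - y) =
      lorentzInner x x - 2 * lorentzInner x y + lorentzInner y y := by
  simp only [← lorentzForm_apply, map_sub, LinearMap.sub_apply]
  simp only [lorentzForm_apply, lorentzInner_comm y x]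
  ring

theorem lorentzInner_sub_add (x y : Fin (d + 1) → ℝ) :
    lorentzInner (x - y) (x + y) = lorentzInner x x - lorentzInner y y := by
  simp only [← lorentzForm_apply, map_add, map_sub, LinearMap.sub_apply]
  simp only [lorentzForm_apply, lorentzInner_comm y x]
  ring

theorem lorentzInner_sum_smul_sum_smul {ι κ : Type*} (s : Finset ι) (t : Finset κ)
    (a : ι → ℝ) (b : κ → ℝ) (x : ι → Fin (d + 1) → ℝ) (y : κ → Fin (d + 1) → ℝ) :
    lorentzInner (∑ i ∈ s, a i • x i) (∑ j ∈ t, b j • y j) =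
      ∑ p ∈ s ×ˢ t, a p.1 * b p.2 * lorentzInner (x p.1) (y p.2) := by
  rw [← lorentzForm_apply, LinearMap.BilinForm.sum_left, sum_product]
  simp only [lorentzForm_apply, LinearMap.BilinForm.sum_right, LinearMap.BilinForm.smul_left,
    LinearMap.BilinForm.smul_right, mul_assoc, mul_left_comm (a _)]

theorem lorentzInner_neg_of_timelike (hx : lorentzInner x x < 0) (hy : lorentzInner y y < 0)
    (hx₀ : 0 < x 0) (hy₀ : 0 < y 0) : lorentzInner x y < 0 := by
  rw [lorentzInner_self, sub_neg] at hx hy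
  rw [lorentzInner_eq_sum_succ, sub_neg]
  refine lt_of_pow_lt_pow_left₀ 2 (mul_pos hx₀ hy₀).le ?_
  calc (∑ i : Fin d, x i.succ * y i.succ) ^ 2
      ≤ (∑ i : Fin d, x i.succ ^ 2) * ∑ i : Fin d, y i.succ ^ 2 :=
        sum_mul_sq_le_sq_mul_sq _ _ _
    _ < x 0 ^ 2 * y 0 ^ 2 :=
        mul_lt_mul'' hx hy (sum_nonneg fun _ _ => sq_nonneg _) (sum_nonneg fun _ _ => sq_nonneg _)
    _ = (x 0 * y 0) ^ 2 := (mul_pow _ _ _).symm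

theorem lorentzInner_self_pos_of_orthogonal_timelike (hv : lorentzInner v v < 0)
    (huv : lorentzInner u v = 0) (hu : u ≠ 0) : 0 < lorentzInner u u := by
  rw [lorentzInner_self, sub_neg] at hv
  rw [lorentzInner_eq_sum_succ, sub_eq_zero] at huv
  rw [lorentzInner_self, sub_pos]
  have hv₀ : 0 < v 0 ^ 2 := (sum_nonneg fun _ _ => sq_nonneg _).trans_lt hv
  have cauchy_schwarz :
      u 0 ^ 2 * v 0 ^ 2 ≤ (∑ i : Fin d, u i.succ ^ 2) * ∑ i : Fin d, v i.succ ^ 2 := by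
    rw [← mul_pow, ← huv]
    exact sum_mul_sq_le_sq_mul_sq _ _ _
  have spatial_pos : 0 < ∑ i : Fin d, u i.succ ^ 2 := by
    refine (sum_nonneg fun _ _ => sq_nonneg _).lt_of_ne' fun h => hu ?_
    have hu₀ : u 0 ^ 2 = 0 :=
      le_antisymm (nonpos_of_mul_nonpos_left (by simpa [h] using cauchy_schwarz) hv₀)
        (sq_nonneg _)
    rw [sum_eq_zero_iff_of_nonneg fun _ _ => sq_nonneg _] at h
    exact funext <| Fin.cases (pow_eq_zero_iff two_ne_zero |>.mp hu₀) fun i =>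
      pow_eq_zero_iff two_ne_zero |>.mp (h i (mem_univ i))
  exact lt_of_mul_lt_mul_right
    (cauchy_schwarz.trans_lt (mul_lt_mul_of_pos_left hv spatial_pos)) hv₀.le

namespace onHyperboloid

theorem mul_lorentzInner_self (hK : K ≠ 0) (hx : onHyperboloid K x) :
    K * lorentzInner x x = 1 := by
  rw [hx.1, mul_one_div_cancel hK]

theorem lorentzInner_self_neg (hK : K < 0) (hx : onHyperboloid K x) : lorentzInner x x < 0 :=
  hx.1 ▸ one_div_neg.mpr hK

theorem lorentzInner_sub_self_pos (hK : K < 0) (hx : onHyperboloid K x) (hy : onHyperboloid K y)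
    (hxy : x ≠ y) : 0 < lorentzInner (x - y) (x - y) := by
  have hx_neg := hx.lorentzInner_self_neg hK
  have hy_neg := hy.lorentzInner_self_neg hK
  have timelike : lorentzInner (x + y) (x + y) < 0 := by
    rw [lorentzInner_add_self]
    linarith [lorentzInner_neg_of_timelike hx_neg hy_neg hx.2 hy.2]
  have orthogonal : lorentzInner (x - y) (x + y) = 0 := by
    rw [lorentzInner_sub_add, hx.1, hy.1, sub_self]
  exact lorentzInner_self_pos_of_orthogonal_timelike timelike orthogonal (sub_ne_zero.mpr hxy)

theorem one_lt_mul_lorentzInner (hK : K < 0) (hx : onHyperboloid K x) (hy : onHyperboloid K y)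
    (hxy : x ≠ y) : 1 < K * lorentzInner x y := by
  have polarization : K * lorentzInner (x - y) (x - y) = 2 - 2 * (K * lorentzInner x y) := by
    rw [lorentzInner_sub_self]
    linear_combination hx.mul_lorentzInner_self hK.ne + hy.mul_lorentzInner_self hK.ne
  linarith [mul_neg_of_neg_of_pos hK (hx.lorentzInner_sub_self_pos hK hy hxy)]

theorem one_le_mul_lorentzInner (hK : K < 0) (hx : onHyperboloid K x) (hy : onHyperboloid K y) :
    1 ≤ K * lorentzInner x y := by
  obtain rfl | hxy := eq_or_ne x y
  · exact (hx.mul_lorentzInner_self hK.ne).ge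
  · exact (hx.one_lt_mul_lorentzInner hK hy hxy).le

theorem mul_lorentzInner_eq_one_iff (hK : K < 0) (hx : onHyperboloid K x)
    (hy : onHyperboloid K y) : K * lorentzInner x y = 1 ↔ x = y := by
  refine ⟨fun h => ?_, fun h => h ▸ hx.mul_lorentzInner_self hK.ne⟩
  by_contra hxy
  exact (hx.one_lt_mul_lorentzInner hK hy hxy).ne' h

end onHyperboloid

/-- The Lorentz projection `Π_K(v) = v / √(K⟨v,v⟩_L)` onto the hyperboloid; it has this meaning only
for timelike `v` with positive time component, and is `0` when `K⟨v,v⟩_L ≤ 0`. -/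
def lorentzProj (K : ℝ) (v : Fin (d + 1) → ℝ) : Fin (d + 1) → ℝ :=
  (Real.sqrt (K * lorentzInner v v))⁻¹ • v

theorem lorentzProj_apply_zero_le (hv₀ : 0 ≤ v 0) (hv : 1 ≤ K * lorentzInner v v) :
    lorentzProj K v 0 ≤ v 0 :=
  mul_le_of_le_one_left hv₀ (inv_le_one_of_one_le₀ (Real.one_le_sqrt.mpr hv))

theorem lorentzProj_apply_zero_eq_iff (hv₀ : v 0 ≠ 0) :
    lorentzProj K v 0 = v 0 ↔ K * lorentzInner v v = 1 := by
  rw [lorentzProj, Pi.smul_apply, smul_eq_mul, mul_eq_right₀ hv₀, inv_eq_one, Real.sqrt_eq_one]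

end Lorentz

section WeightedMean

variable {ι : Type*} {d : ℕ} {K : ℝ} {s : Finset ι} {w : ι → ℝ} {x : ι → Fin (d + 1) → ℝ}

theorem mul_lorentzInner_sum_smul_self_sub_one (hw₁ : ∑ i ∈ s, w i = 1) :
    K * lorentzInner (∑ i ∈ s, w i • x i) (∑ i ∈ s, w i • x i) - 1 =
      ∑ p ∈ s ×ˢ s, w p.1 * w p.2 * (K * lorentzInner (x p.1) (x p.2) - 1) := by
  have weights : ∑ p ∈ s ×ˢ s, w p.1 * w p.2 = 1 := by
    rw [sum_product, ← sum_mul_sum, hw₁, one_mul]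
  simp only [lorentzInner_sum_smul_sum_smul, mul_sub_one, sum_sub_distrib, weights, mul_sum,
    mul_left_comm K]

theorem mul_mul_lorentzInner_sub_one_nonneg (hK : K < 0) (hw : ∀ i ∈ s, 0 ≤ w i)
    (hx : ∀ i ∈ s, onHyperboloid K (x i)) :
    ∀ p ∈ s ×ˢ s, 0 ≤ w p.1 * w p.2 * (K * lorentzInner (x p.1) (x p.2) - 1) := by
  intro p hp
  obtain ⟨hi, hj⟩ := mem_product.mp hp
  exact mul_nonneg (mul_nonneg (hw _ hi) (hw _ hj))
    (sub_nonneg.mpr ((hx _ hi).one_le_mul_lorentzInner hK (hx _ hj)))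

theorem one_le_mul_lorentzInner_sum_smul_self (hK : K < 0) (hw : ∀ i ∈ s, 0 ≤ w i)
    (hw₁ : ∑ i ∈ s, w i = 1) (hx : ∀ i ∈ s, onHyperboloid K (x i)) :
    1 ≤ K * lorentzInner (∑ i ∈ s, w i • x i) (∑ i ∈ s, w i • x i) := by
  rw [← sub_nonneg, mul_lorentzInner_sum_smul_self_sub_one hw₁]
  exact sum_nonneg (mul_mul_lorentzInner_sub_one_nonneg hK hw hx)

theorem mul_lorentzInner_sum_smul_self_eq_one_iff (hK : K < 0) (hw : ∀ i ∈ s, 0 < w i)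
    (hw₁ : ∑ i ∈ s, w i = 1) (hx : ∀ i ∈ s, onHyperboloid K (x i)) :
    K * lorentzInner (∑ i ∈ s, w i • x i) (∑ i ∈ s, w i • x i) = 1 ↔
      ∀ i ∈ s, ∀ j ∈ s, x i = x j := by
  have summand_eq_zero_iff : ∀ i ∈ s, ∀ j ∈ s,
      w i * w j * (K * lorentzInner (x i) (x j) - 1) = 0 ↔ x i = x j := fun i hi j hj => by
    rw [mul_eq_zero_iff_left (mul_pos (hw i hi) (hw j hj)).ne', sub_eq_zero,
      (hx i hi).mul_lorentzInner_eq_one_iff hK (hx j hj)]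
  rw [← sub_eq_zero, mul_lorentzInner_sum_smul_self_sub_one hw₁, sum_eq_zero_iff_of_nonneg
    (mul_mul_lorentzInner_sub_one_nonneg hK (fun i hi => (hw i hi).le) hx)]
  constructor
  · exact fun h i hi j hj =>
      (summand_eq_zero_iff i hi j hj).mp (h (i, j) (mk_mem_product hi hj))
  · intro h p hp
    obtain ⟨hi, hj⟩ := mem_product.mp hp
    exact (summand_eq_zero_iff _ hi _ hj).mpr (h _ hi _ hj)

theorem euclidean_mean_contracts_general (hK : K < 0) (hw : ∀ i ∈ s, 0 < w i)
    (hw₁ : ∑ i ∈ s, w i = 1) (hx : ∀ i ∈ s, onHyperboloid K (x i)) :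
    lorentzProj K (∑ i ∈ s, w i • x i) 0 ≤ ∑ i ∈ s, w i * x i 0 ∧
      (lorentzProj K (∑ i ∈ s, w i • x i) 0 = ∑ i ∈ s, w i * x i 0 ↔
        ∀ i ∈ s, ∀ j ∈ s, x i = x j) := by
  have depth_mean : ∑ i ∈ s, w i * x i 0 = (∑ i ∈ s, w i • x i) 0 := by
    simp only [Finset.sum_apply, Pi.smul_apply, smul_eq_mul]
  have depth_pos : 0 < (∑ i ∈ s, w i • x i) 0 := by
    rw [← depth_mean]
    exact sum_pos (fun i hi => mul_pos (hw i hi) (hx i hi).2)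
      (nonempty_of_sum_ne_zero (hw₁.trans_ne one_ne_zero))
  rw [depth_mean]
  exact ⟨lorentzProj_apply_zero_le depth_pos.le
      (one_le_mul_lorentzInner_sum_smul_self hK (fun i hi => (hw i hi).le) hw₁ hx),
    (lorentzProj_apply_zero_eq_iff depth_pos.ne').trans
      (mul_lorentzInner_sum_smul_self_eq_one_iff hK hw hw₁ hx)⟩

end WeightedMean

/-- Euclidean Mean Contracts: the radial depth (time component) of the projected
Euclidean mean is at most the mean radial depth, with equality iff all points
are identical. -/
theorem euclidean_mean_contracts {d n : ℕ} {K : ℝ} (hK : K < 0) (hn : 2 ≤ n)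
    {x : Fin n → Fin (d + 1) → ℝ} (hx : ∀ i, onHyperboloid K (x i)) :
    ((Real.sqrt (K * lorentzInner ((n : ℝ)⁻¹ • ∑ i, x i) ((n : ℝ)⁻¹ • ∑ i, x i)))⁻¹ •
        ((n : ℝ)⁻¹ • ∑ i, x i)) 0 ≤ (n : ℝ)⁻¹ * ∑ i, x i 0 ∧
    (((Real.sqrt (K * lorentzInner ((n : ℝ)⁻¹ • ∑ i, x i) ((n : ℝ)⁻¹ • ∑ i, x i)))⁻¹ •
        ((n : ℝ)⁻¹ • ∑ i, x i)) 0 = (n : ℝ)⁻¹ * ∑ i, x i 0 ↔ ∀ i j, x i = x j) := by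
  have hn₀ : (0 : ℝ) < n := by exact_mod_cast two_pos.trans_le hn
  simpa only [lorentzProj, ← smul_sum, ← mul_sum, mem_univ, true_imp_iff] using
    euclidean_mean_contracts_general (s := univ) hK (fun _ _ => inv_pos.mpr hn₀)
      (by simp [hn₀.ne']) fun i _ => hx i
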